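/- For δ ≥ 0 set γ_δ = ((σ_m^{−1}−1)+ρ_n^{−1}δ)/(σ_m^{−1}+(ρ_n^{−1}−1)δ) if δ ≥ 1, and γ_δ = ((σ_1^{−1}−1)+ρ_1^{−1}δ)/(σ_1^{−1}+(ρ_1^{−1}−1)δ) if 0 ≤ δ ≤ 1. Then for every k ∈ {1,…,d} and every δ ≥ 0: if ψ̲_k(Λ*(Θ), μ*(δ)) ≤ 1 − δ then ψ̲_k(Λ*(Θ), −μ(γ_δ)) ≤ (d−1)(1 − γ_δ); and if ψ̄_k(Λ*(Θ), μ*(δ)) ≤ 1 − δ then ψ̄_k(Λ*(Θ), −μ(γ_δ)) ≤ (d−1)(1 − γ_δ). -/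

import Mathlib

open Filter

noncomputable section

/-- The weighted norm `|x|_w = max_j |x_j|^(1/w_j)`. -/
def wnorm {k : ℕ} (w : Fin k → ℝ) (x : Fin k → ℝ) : ℝ := ⨆ j, |x j| ^ ((1 : ℝ) / w j)

/-- The lattice `Λ(Θ) = {(x, y − Θx) : x ∈ ℤ^m, y ∈ ℤ^n} ⊂ ℝ^(m+n)`. -/
def latt (m n : ℕ) (Θ : Matrix (Fin n) (Fin m) ℝ) : Set (Fin (m + n) → ℝ) :=
  {v | ∃ (x : Fin m → ℤ) (y : Fin n → ℤ),
    v = Fin.append (fun j => (x j : ℝ))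
      (fun i => (y i : ℝ) - Θ.mulVec (fun j => (x j : ℝ)) i)}

/-- The dual lattice `Λ*(Θ) = {(x + ᵀΘy, y) : x ∈ ℤ^m, y ∈ ℤ^n} ⊂ ℝ^(m+n)`. -/
def lattDual (m n : ℕ) (Θ : Matrix (Fin n) (Fin m) ℝ) : Set (Fin (m + n) → ℝ) :=
  {v | ∃ (x : Fin m → ℤ) (y : Fin n → ℤ),
    v = Fin.append (fun j => (x j : ℝ) + Θ.transpose.mulVec (fun i => (y i : ℝ)) j)
      (fun i => (y i : ℝ))}

/-- `e₁ = (1−dσ₁, …, 1−dσ_m, 1, …, 1)` with `n` trailing ones, `d = m + n`. -/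
def eOne (m n : ℕ) (σ : Fin m → ℝ) : Fin (m + n) → ℝ :=
  Fin.append (fun j => 1 - ((m + n : ℕ) : ℝ) * σ j) (fun _ => 1)

/-- `e₂ = (1, …, 1, 1−dρ_n, …, 1−dρ₁)` with `m` leading ones, `d = m + n`. -/
def eTwo (m n : ℕ) (ρ : Fin n → ℝ) : Fin (m + n) → ℝ :=
  Fin.append (fun _ => (1 : ℝ)) (fun i => 1 - ((m + n : ℕ) : ℝ) * ρ i.rev)

/-- `μ(γ) = −e₁ + γ e₂`. -/
def muGamma (m n : ℕ) (σ : Fin m → ℝ) (ρ : Fin n → ℝ) (γ : ℝ) : Fin (m + n) → ℝ :=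
  -eOne m n σ + γ • eTwo m n ρ

/-- `μ*(δ) = δ e₁ − e₂`. -/
def muStar (m n : ℕ) (σ : Fin m → ℝ) (ρ : Fin n → ℝ) (δ : ℝ) : Fin (m + n) → ℝ :=
  δ • eOne m n σ - eTwo m n ρ

/-- The `k`-th successive minimum `λ_k(B_τ, Λ)` of the box
`B_τ = {z : |z_i| ≤ exp (τ i)}` with respect to the lattice `Λ`. -/
def succMin (d : ℕ) (Λ : Set (Fin d → ℝ)) (τ : Fin d → ℝ) (k : ℕ) : ℝ :=
  sInf {lam : ℝ | 0 < lam ∧ ∃ v : Fin k → (Fin d → ℝ),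
    (∀ l, v l ∈ Λ) ∧ LinearIndependent ℝ v ∧ ∀ l i, |v l i| ≤ lam * Real.exp (τ i)}

/-- `L_k(Λ, τ) = log λ_k(B_τ, Λ)`. -/
def Lk (d : ℕ) (Λ : Set (Fin d → ℝ)) (τ : Fin d → ℝ) (k : ℕ) : ℝ :=
  Real.log (succMin d Λ τ k)

/-- `S_k(Λ, τ) = L_1(Λ, τ) + ⋯ + L_k(Λ, τ)`. -/
def Sk (d : ℕ) (Λ : Set (Fin d → ℝ)) (τ : Fin d → ℝ) (k : ℕ) : ℝ :=
  ∑ j ∈ Finset.Icc 1 k, Lk d Λ τ j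

/-- Schmidt–Summerer lower exponent of the first type:
`ψ̲_k(Λ, μ) = liminf_{s→+∞} L_k(Λ, sμ)/s`. -/
def psiLow (d : ℕ) (Λ : Set (Fin d → ℝ)) (μ : Fin d → ℝ) (k : ℕ) : ℝ :=
  liminf (fun s : ℝ => Lk d Λ (s • μ) k / s) atTop

/-- Schmidt–Summerer upper exponent of the first type:
`ψ̄_k(Λ, μ) = limsup_{s→+∞} L_k(Λ, sμ)/s`. -/
def psiUp (d : ℕ) (Λ : Set (Fin d → ℝ)) (μ : Fin d → ℝ) (k : ℕ) : ℝ :=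
  limsup (fun s : ℝ => Lk d Λ (s • μ) k / s) atTop

/-- Schmidt–Summerer lower exponent of the second type:
`Ψ̲_k(Λ, μ) = liminf_{s→+∞} S_k(Λ, sμ)/s`. -/
def PsiLow (d : ℕ) (Λ : Set (Fin d → ℝ)) (μ : Fin d → ℝ) (k : ℕ) : ℝ :=
  liminf (fun s : ℝ => Sk d Λ (s • μ) k / s) atTop

/-- Schmidt–Summerer upper exponent of the second type:
`Ψ̄_k(Λ, μ) = limsup_{s→+∞} S_k(Λ, sμ)/s`. -/
def PsiUp (d : ℕ) (Λ : Set (Fin d → ℝ)) (μ : Fin d → ℝ) (k : ℕ) : ℝ :=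
  limsup (fun s : ℝ => Sk d Λ (s • μ) k / s) atTop

/-- The system `|x|_σ ≤ t`, `|Θx − y|_ρ ≤ t^(−γ)` admits `k` linearly independent integer
solutions. -/
def solvK {m n : ℕ} (Θ : Matrix (Fin n) (Fin m) ℝ) (σ : Fin m → ℝ) (ρ : Fin n → ℝ)
    (k : ℕ) (γ t : ℝ) : Prop :=
  ∃ v : Fin k → (Fin m → ℤ) × (Fin n → ℤ), LinearIndependent ℤ v ∧
    ∀ l, wnorm σ (fun j => ((v l).1 j : ℝ)) ≤ t ∧
      wnorm ρ (fun i => Θ.mulVec (fun j => ((v l).1 j : ℝ)) i - ((v l).2 i : ℝ)) ≤ t ^ (-γ)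

/-- The `k`-th weighted Diophantine exponent `ω^(k)_{σ,ρ}(Θ)`. -/
def omegaK {m n : ℕ} (Θ : Matrix (Fin n) (Fin m) ℝ) (σ : Fin m → ℝ) (ρ : Fin n → ℝ)
    (k : ℕ) : EReal :=
  sSup (Real.toEReal '' {γ : ℝ | ∀ T : ℝ, ∃ t > T, solvK Θ σ ρ k γ t})

/-- The `k`-th weighted uniform Diophantine exponent `ω̂^(k)_{σ,ρ}(Θ)`. -/
def omegaHatK {m n : ℕ} (Θ : Matrix (Fin n) (Fin m) ℝ) (σ : Fin m → ℝ) (ρ : Fin n → ℝ)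
    (k : ℕ) : EReal :=
  sSup (Real.toEReal '' {γ : ℝ | ∃ T : ℝ, ∀ t > T, solvK Θ σ ρ k γ t})

/-- The set whose infimum is `succMin`. -/
def smSet (d : ℕ) (Λ : Set (Fin d → ℝ)) (τ : Fin d → ℝ) (k : ℕ) : Set ℝ :=
  {lam : ℝ | 0 < lam ∧ ∃ v : Fin k → (Fin d → ℝ),
    (∀ l, v l ∈ Λ) ∧ LinearIndependent ℝ v ∧ ∀ l i, |v l i| ≤ lam * Real.exp (τ i)}

lemma smSet_lower {d : ℕ} {Λ : Set (Fin d → ℝ)} (h1 : ∀ v ∈ Λ, v ≠ 0 → ∃ i, 1 ≤ |v i|)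
    {τ : Fin d → ℝ} {k : ℕ} (hk : 1 ≤ k) {M : ℝ} (hM : ∀ i, τ i ≤ M) {lam : ℝ}
    (h : lam ∈ smSet d Λ τ k) : Real.exp (-M) ≤ lam := by
  obtain ⟨h0, v, hv, hli, hb⟩ := h
  obtain ⟨i, hi⟩ := h1 _ (hv ⟨0, hk⟩) (hli.ne_zero _)
  have h2 := hi.trans (hb ⟨0, hk⟩ i)
  have h3 : lam * Real.exp (τ i) ≤ lam * Real.exp M :=
    mul_le_mul_of_nonneg_left (Real.exp_le_exp.2 (hM i)) h0.le
  rw [Real.exp_neg, inv_le_iff_one_le_mul₀ (Real.exp_pos M)]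
  linarith

lemma smSet_mono {d : ℕ} {Λ : Set (Fin d → ℝ)} {τ τ' : Fin d → ℝ} {k : ℕ} {a : ℝ}
    (ha : ∀ i, τ i ≤ a + τ' i) {lam : ℝ}
    (h : lam ∈ smSet d Λ τ k) : lam * Real.exp a ∈ smSet d Λ τ' k := by
  obtain ⟨h0, v, hv, hli, hb⟩ := h
  refine ⟨mul_pos h0 (Real.exp_pos a), v, hv, hli, fun l i => (hb l i).trans ?_⟩
  rw [mul_assoc, ← Real.exp_add]
  exact mul_le_mul_of_nonneg_left (Real.exp_le_exp.2 (ha i)) h0.le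

lemma smSet_zero {d : ℕ} {Λ : Set (Fin d → ℝ)} {k : ℕ}
    (h2 : ∃ v : Fin k → (Fin d → ℝ), (∀ l, v l ∈ Λ) ∧ LinearIndependent ℝ v) :
    (smSet d Λ 0 k).Nonempty := by
  obtain ⟨v, hv, hli⟩ := h2
  refine ⟨1 + ∑ l, ∑ i, |v l i|, by positivity, v, hv, hli, fun l i => ?_⟩
  simp only [Pi.zero_apply, Real.exp_zero, mul_one]
  have a1 : |v l i| ≤ ∑ i, |v l i| :=
    Finset.single_le_sum (f := fun i => |v l i|) (fun _ _ => abs_nonneg _) (Finset.mem_univ i)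
  have a2 : ∑ i, |v l i| ≤ ∑ l, ∑ i, |v l i| :=
    Finset.single_le_sum (f := fun l => ∑ i, |v l i|)
      (fun _ _ => Finset.sum_nonneg fun _ _ => abs_nonneg _) (Finset.mem_univ l)
  linarith

lemma smSet_nonempty {d : ℕ} {Λ : Set (Fin d → ℝ)} {k : ℕ}
    (h2 : ∃ v : Fin k → (Fin d → ℝ), (∀ l, v l ∈ Λ) ∧ LinearIndependent ℝ v)
    (τ : Fin d → ℝ) : (smSet d Λ τ k).Nonempty := by
  obtain ⟨lam, h⟩ := smSet_zero h2
  refine ⟨_, smSet_mono (a := ∑ i, |τ i|) (fun i => ?_) h⟩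
  have a1 : |τ i| ≤ ∑ i, |τ i| :=
    Finset.single_le_sum (f := fun i => |τ i|) (fun _ _ => abs_nonneg _) (Finset.mem_univ i)
  have := neg_abs_le (τ i)
  simp only [Pi.zero_apply]
  linarith

lemma succMin_lower {d : ℕ} {Λ : Set (Fin d → ℝ)} (h1 : ∀ v ∈ Λ, v ≠ 0 → ∃ i, 1 ≤ |v i|)
    {k : ℕ} (hk : 1 ≤ k)
    (h2 : ∃ v : Fin k → (Fin d → ℝ), (∀ l, v l ∈ Λ) ∧ LinearIndependent ℝ v)
    {τ : Fin d → ℝ} {M : ℝ} (hM : ∀ i, τ i ≤ M) : Real.exp (-M) ≤ succMin d Λ τ k :=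
  le_csInf (smSet_nonempty h2 τ) fun _ h => smSet_lower h1 hk hM h

lemma succMin_pos {d : ℕ} {Λ : Set (Fin d → ℝ)} (h1 : ∀ v ∈ Λ, v ≠ 0 → ∃ i, 1 ≤ |v i|)
    {k : ℕ} (hk : 1 ≤ k)
    (h2 : ∃ v : Fin k → (Fin d → ℝ), (∀ l, v l ∈ Λ) ∧ LinearIndependent ℝ v)
    (τ : Fin d → ℝ) : 0 < succMin d Λ τ k := by
  refine (Real.exp_pos _).trans_le (succMin_lower h1 hk h2 (M := ∑ i, |τ i|) fun i => ?_)
  exact (le_abs_self _).trans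
    (Finset.single_le_sum (f := fun i => |τ i|) (fun _ _ => abs_nonneg _) (Finset.mem_univ i))

lemma Lk_mono {d : ℕ} {Λ : Set (Fin d → ℝ)} (h1 : ∀ v ∈ Λ, v ≠ 0 → ∃ i, 1 ≤ |v i|)
    {k : ℕ} (hk : 1 ≤ k)
    (h2 : ∃ v : Fin k → (Fin d → ℝ), (∀ l, v l ∈ Λ) ∧ LinearIndependent ℝ v)
    {τ τ' : Fin d → ℝ} {a : ℝ} (ha : ∀ i, τ i ≤ a + τ' i) :
    Lk d Λ τ' k ≤ Lk d Λ τ k + a := by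
  have h : succMin d Λ τ' k * Real.exp (-a) ≤ succMin d Λ τ k := by
    refine le_csInf (smSet_nonempty h2 τ) fun lam h => ?_
    have h3 : succMin d Λ τ' k ≤ lam * Real.exp a :=
      csInf_le ⟨0, fun x hx => hx.1.le⟩ (smSet_mono ha h)
    rw [Real.exp_neg, ← div_eq_mul_inv, div_le_iff₀ (Real.exp_pos a)]
    exact h3
  have hp := succMin_pos h1 hk h2 τ'
  have h4 := Real.log_le_log (mul_pos hp (Real.exp_pos _)) h
  rw [Real.log_mul hp.ne' (Real.exp_pos _).ne', Real.log_exp] at h4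
  unfold Lk
  linarith

lemma Lk_bdd {d : ℕ} {Λ : Set (Fin d → ℝ)} (h1 : ∀ v ∈ Λ, v ≠ 0 → ∃ i, 1 ≤ |v i|)
    {k : ℕ} (hk : 1 ≤ k)
    (h2 : ∃ v : Fin k → (Fin d → ℝ), (∀ l, v l ∈ Λ) ∧ LinearIndependent ℝ v)
    (μ : Fin d → ℝ) : ∃ C : ℝ, ∀ᶠ s : ℝ in atTop, |Lk d Λ (s • μ) k / s| ≤ C := by
  refine ⟨|Lk d Λ 0 k| + ∑ i, |μ i|, ?_⟩
  filter_upwards [eventually_ge_atTop (1 : ℝ)] with s hs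
  have hμ : ∀ i, |s * μ i| ≤ s * ∑ i, |μ i| := fun i => by
    rw [abs_mul, abs_of_pos (by linarith : 0 < s)]
    exact mul_le_mul_of_nonneg_left
      (Finset.single_le_sum (f := fun i => |μ i|) (fun _ _ => abs_nonneg _) (Finset.mem_univ i))
      (by linarith)
  have a1 : Lk d Λ (s • μ) k ≤ Lk d Λ 0 k + s * ∑ i, |μ i| :=
    Lk_mono h1 hk h2 fun i => by
      have := hμ i
      have := neg_abs_le (s * μ i)
      simp only [Pi.zero_apply, Pi.smul_apply, smul_eq_mul]
      linarith
  have a2 : Lk d Λ 0 k ≤ Lk d Λ (s • μ) k + s * ∑ i, |μ i| :=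
    Lk_mono h1 hk h2 fun i => by
      have := hμ i
      have := le_abs_self (s * μ i)
      simp only [Pi.zero_apply, Pi.smul_apply, smul_eq_mul]
      linarith
  have h0 : |Lk d Λ 0 k| ≤ s * |Lk d Λ 0 k| := le_mul_of_one_le_left (abs_nonneg _) hs
  rw [abs_div, abs_of_pos (by linarith : 0 < s), div_le_iff₀ (by linarith), abs_le]
  have := neg_abs_le (Lk d Λ 0 k)
  have := le_abs_self (Lk d Λ 0 k)
  constructor <;> nlinarith

lemma transfer {d : ℕ} {Λ : Set (Fin d → ℝ)} (h1 : ∀ v ∈ Λ, v ≠ 0 → ∃ i, 1 ≤ |v i|)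
    {k : ℕ} (hk : 1 ≤ k)
    (h2 : ∃ v : Fin k → (Fin d → ℝ), (∀ l, v l ∈ Λ) ∧ LinearIndependent ℝ v)
    {μ ν : Fin d → ℝ} {c A K : ℝ} (hc : 0 < c)
    (hμ : ∀ i, A + μ i ≤ c * (K + ν i)) :
    (psiLow d Λ μ k ≤ A → psiLow d Λ ν k ≤ K) ∧ (psiUp d Λ μ k ≤ A → psiUp d Λ ν k ≤ K) := by
  obtain ⟨C, hC⟩ := Lk_bdd h1 hk h2 μ
  obtain ⟨C', hC'⟩ := Lk_bdd h1 hk h2 ν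
  have key : ∀ s : ℝ, 0 < s →
      c * (Lk d Λ ((c * s) • ν) k / (c * s) - K) ≤ Lk d Λ (s • μ) k / s - A := by
    intro s hs
    have h : Lk d Λ ((c * s) • ν) k ≤ Lk d Λ (s • μ) k + s * (c * K - A) :=
      Lk_mono h1 hk h2 fun i => by
        have := mul_le_mul_of_nonneg_left (hμ i) hs.le
        simp only [Pi.smul_apply, smul_eq_mul]
        linarith
    have e : c * (Lk d Λ ((c * s) • ν) k / (c * s) - K) =
        (Lk d Λ ((c * s) • ν) k - s * (c * K)) / s := by
      field_simp
    have e' : Lk d Λ (s • μ) k / s - A = (Lk d Λ (s • μ) k - s * A) / s := by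
      field_simp
    rw [e, e']
    gcongr ?_ / s
    linarith
  have bU : IsBoundedUnder (· ≤ ·) atTop (fun s : ℝ => Lk d Λ (s • μ) k / s) :=
    ⟨C, by simpa using hC.mono fun s h => (abs_le.1 h).2⟩
  have bL : IsBoundedUnder (· ≥ ·) atTop (fun s : ℝ => Lk d Λ (s • μ) k / s) :=
    ⟨-C, by simpa using hC.mono fun s h => (abs_le.1 h).1⟩
  have bU' : IsBoundedUnder (· ≤ ·) atTop (fun s : ℝ => Lk d Λ (s • ν) k / s) :=
    ⟨C', by simpa using hC'.mono fun s h => (abs_le.1 h).2⟩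
  have bL' : IsBoundedUnder (· ≥ ·) atTop (fun s : ℝ => Lk d Λ (s • ν) k / s) :=
    ⟨-C', by simpa using hC'.mono fun s h => (abs_le.1 h).1⟩
  constructor
  · intro h
    refine le_of_forall_pos_le_add fun ε hε => ?_
    have hlt : psiLow d Λ μ k < A + c * ε := by nlinarith
    have hf := frequently_lt_of_liminf_lt bU.isCoboundedUnder_ge hlt
    refine liminf_le_of_frequently_le ?_ bL'
    refine (tendsto_id.const_mul_atTop hc).frequently ?_
    refine (hf.and_eventually (eventually_gt_atTop 0)).mono fun s hs => ?_
    have := key s hs.2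
    have h3 : c * (Lk d Λ ((c * s) • ν) k / (c * s) - K) ≤ c * ε := by linarith [hs.1]
    have := le_of_mul_le_mul_left h3 hc
    simp only [id]
    linarith
  · intro h
    refine le_of_forall_pos_le_add fun ε hε => ?_
    have hlt : psiUp d Λ μ k < A + c * ε := by nlinarith
    have hf := eventually_lt_of_limsup_lt hlt bU
    refine limsup_le_of_le bL'.isCoboundedUnder_le ?_
    have ht : Tendsto (fun t : ℝ => c⁻¹ * t) atTop atTop :=
      tendsto_id.const_mul_atTop (inv_pos.2 hc)
    filter_upwards [ht.eventually hf, ht.eventually (eventually_gt_atTop 0)] with t h4 h5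
    have := key _ h5
    rw [mul_inv_cancel_left₀ hc.ne'] at this
    have h3 : c * (Lk d Λ (t • ν) k / t - K) ≤ c * ε := by linarith
    have := le_of_mul_le_mul_left h3 hc
    linarith

lemma lattDual_h1 {m n : ℕ} (Θ : Matrix (Fin n) (Fin m) ℝ) :
    ∀ v ∈ lattDual m n Θ, v ≠ 0 → ∃ i, 1 ≤ |v i| := by
  rintro v ⟨x, y, rfl⟩ hv
  by_cases hy : y = 0
  · subst hy
    by_cases hx : x = 0
    · subst hx
      exfalso
      apply hv
      ext i
      refine Fin.addCases (fun j => ?_) (fun j => ?_) i <;> simp [Matrix.mulVec, dotProduct]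
    · obtain ⟨j, hj⟩ := Function.ne_iff.1 hx
      refine ⟨Fin.castAdd n j, ?_⟩
      simp only [Fin.append_left]
      have : (1 : ℝ) ≤ |(x j : ℝ)| := by exact_mod_cast Int.one_le_abs hj
      simpa [Matrix.mulVec, dotProduct] using this
  · obtain ⟨j, hj⟩ := Function.ne_iff.1 hy
    refine ⟨Fin.natAdd m j, ?_⟩
    simp only [Fin.append_right]
    exact_mod_cast Int.one_le_abs hj

lemma lattDual_h2 {m n : ℕ} (Θ : Matrix (Fin n) (Fin m) ℝ) {k : ℕ} (hk : k ≤ m + n) :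
    ∃ v : Fin k → (Fin (m + n) → ℝ), (∀ l, v l ∈ lattDual m n Θ) ∧ LinearIndependent ℝ v := by
  let w : Fin (m + n) → (Fin (m + n) → ℝ) := Fin.addCases
    (fun j => Fin.append (Pi.single j 1) 0)
    (fun i => Fin.append (fun j => Θ i j) (Pi.single i 1))
  have hw : ∀ l, w l ∈ lattDual m n Θ := by
    intro l
    refine Fin.addCases (fun j => ?_) (fun j => ?_) l
    · refine ⟨Pi.single j 1, 0, ?_⟩
      simp only [w, Fin.addCases_left]
      congr 1
      · ext i
        by_cases h : i = j
        · subst h; simp [Matrix.mulVec, dotProduct]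
        · simp [Matrix.mulVec, dotProduct, h]
      · ext i; simp
    · refine ⟨0, Pi.single j 1, ?_⟩
      simp only [w, Fin.addCases_right]
      have e : (fun i => ((Pi.single j 1 : Fin n → ℤ) i : ℝ)) = Pi.single j 1 := by
        ext i
        by_cases h : i = j
        · subst h; simp
        · simp [h]
      rw [e]
      congr 1
      ext i
      simp [Matrix.mulVec_single]
  have hli : LinearIndependent ℝ w := by
    rw [Fintype.linearIndependent_iff]
    intro g hg
    have hr : ∀ i, g (Fin.natAdd m i) = 0 := by
      intro i
      have := congrFun hg (Fin.natAdd m i)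
      simpa [Fin.sum_univ_add, w, Pi.single_apply] using this
    have hl : ∀ i, g (Fin.castAdd n i) = 0 := by
      intro i
      have := congrFun hg (Fin.castAdd n i)
      simpa [Fin.sum_univ_add, w, hr, Pi.single_apply] using this
    intro i
    exact Fin.addCases hl hr i
  exact ⟨fun l => w (Fin.castLE hk l), fun l => hw _, hli.comp _ (Fin.castLE_injective hk)⟩

/-- The arithmetic behind the choice of `γ_δ`. -/
lemma arith {σ₀ ρ₀ δ γ : ℝ} (hσ : 0 < σ₀) (hσ1 : σ₀ ≤ 1) (hρ : 0 < ρ₀) (hρ1 : ρ₀ ≤ 1)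
    (hδ : 0 ≤ δ)
    (hγ : γ = ((σ₀⁻¹ - 1) + ρ₀⁻¹ * δ) / (σ₀⁻¹ + (ρ₀⁻¹ - 1) * δ)) :
    ∃ c : ℝ, 0 < c ∧ (∀ s : ℝ, 0 ≤ (1 - δ) * (σ₀ - s) → -δ * s ≤ c * ((1 - γ) - s)) ∧
      (∀ r : ℝ, 0 ≤ (1 - δ) * (ρ₀ - r) → r ≤ c * ((1 - γ) + γ * r)) := by
  have ha : 1 ≤ σ₀⁻¹ := (one_le_inv₀ hσ).2 hσ1
  have hb : 1 ≤ ρ₀⁻¹ := (one_le_inv₀ hρ).2 hρ1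
  have ea : σ₀ = (σ₀⁻¹)⁻¹ := (inv_inv _).symm
  have eb : ρ₀ = (ρ₀⁻¹)⁻¹ := (inv_inv _).symm
  generalize σ₀⁻¹ = a at *
  generalize ρ₀⁻¹ = b at *
  subst ea eb
  have hD : 0 < a + (b - 1) * δ := by nlinarith
  have hE : 0 < a + b - 1 := by linarith
  refine ⟨(a + (b - 1) * δ) / (a + b - 1), by positivity, fun s hs => ?_, fun r hr => ?_⟩
  · have e : (a + (b - 1) * δ) / (a + b - 1) * ((1 - γ) - s) - (-δ * s)
        = a * ((1 - δ) * (a⁻¹ - s)) / (a + b - 1) := by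
      have : a ≠ 0 := by linarith
      rw [hγ]; field_simp; ring
    have : 0 ≤ a * ((1 - δ) * (a⁻¹ - s)) / (a + b - 1) := by positivity
    linarith
  · have e : (a + (b - 1) * δ) / (a + b - 1) * ((1 - γ) + γ * r) - r
        = b * ((1 - δ) * (b⁻¹ - r)) / (a + b - 1) := by
      have : b ≠ 0 := by linarith
      rw [hγ]; field_simp; ring
    have : 0 ≤ b * ((1 - δ) * (b⁻¹ - r)) / (a + b - 1) := by positivity
    linarith

theorem stmt12 {m n : ℕ} (Θ : Matrix (Fin (n + 1)) (Fin (m + 1)) ℝ)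
    (σ : Fin (m + 1) → ℝ) (ρ : Fin (n + 1) → ℝ)
    (hσa : Antitone σ) (hρa : Antitone ρ)
    (hσp : ∀ j, 0 < σ j) (hρp : ∀ i, 0 < ρ i)
    (hσs : ∑ j, σ j = 1) (hρs : ∑ i, ρ i = 1)
    (δ : ℝ) (hδ : 0 ≤ δ)
    (γδ : ℝ)
    (hγδ : γδ = if 1 ≤ δ then
        (((σ (Fin.last m))⁻¹ - 1) + (ρ (Fin.last n))⁻¹ * δ) /
          ((σ (Fin.last m))⁻¹ + ((ρ (Fin.last n))⁻¹ - 1) * δ)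
      else
        (((σ 0)⁻¹ - 1) + (ρ 0)⁻¹ * δ) / ((σ 0)⁻¹ + ((ρ 0)⁻¹ - 1) * δ))
    (k : ℕ) (hk1 : 1 ≤ k) (hkd : k ≤ m + 1 + (n + 1)) :
    (psiLow (m + 1 + (n + 1)) (lattDual (m + 1) (n + 1) Θ)
        (muStar (m + 1) (n + 1) σ ρ δ) k ≤ 1 - δ →
      psiLow (m + 1 + (n + 1)) (lattDual (m + 1) (n + 1) Θ)
        (-muGamma (m + 1) (n + 1) σ ρ γδ) k ≤
          ((m + 1 + (n + 1) : ℕ) - 1 : ℝ) * (1 - γδ)) ∧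
    (psiUp (m + 1 + (n + 1)) (lattDual (m + 1) (n + 1) Θ)
        (muStar (m + 1) (n + 1) σ ρ δ) k ≤ 1 - δ →
      psiUp (m + 1 + (n + 1)) (lattDual (m + 1) (n + 1) Θ)
        (-muGamma (m + 1) (n + 1) σ ρ γδ) k ≤
          ((m + 1 + (n + 1) : ℕ) - 1 : ℝ) * (1 - γδ)) := by
  have hσ1 : ∀ j, σ j ≤ 1 := fun j =>
    hσs ▸ Finset.single_le_sum (fun i _ => (hσp i).le) (Finset.mem_univ j)
  have hρ1 : ∀ j, ρ j ≤ 1 := fun j =>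
    hρs ▸ Finset.single_le_sum (fun i _ => (hρp i).le) (Finset.mem_univ j)
  have hc : ∃ c : ℝ, 0 < c ∧ (∀ j, -δ * σ j ≤ c * ((1 - γδ) - σ j)) ∧
      (∀ i, ρ i ≤ c * ((1 - γδ) + γδ * ρ i)) := by
    split_ifs at hγδ with h
    · obtain ⟨c, h0, h1, h2⟩ := arith (hσp _) (hσ1 _) (hρp _) (hρ1 _) hδ hγδ
      exact ⟨c, h0,
        fun j => h1 _ (mul_nonneg_of_nonpos_of_nonpos (by linarith)
          (by linarith [hσa (Fin.le_last j)])),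
        fun j => h2 _ (mul_nonneg_of_nonpos_of_nonpos (by linarith)
          (by linarith [hρa (Fin.le_last j)]))⟩
    · obtain ⟨c, h0, h1, h2⟩ := arith (hσp _) (hσ1 _) (hρp _) (hρ1 _) hδ hγδ
      exact ⟨c, h0,
        fun j => h1 _ (mul_nonneg (by linarith) (by linarith [hσa (Fin.zero_le j)])),
        fun j => h2 _ (mul_nonneg (by linarith) (by linarith [hρa (Fin.zero_le j)]))⟩
  obtain ⟨c, hc0, hcσ, hcρ⟩ := hc
  refine transfer (lattDual_h1 Θ) hk1 (lattDual_h2 Θ hkd) hc0 fun i => ?_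
  have hd : (0 : ℝ) ≤ ((m + 1 + (n + 1) : ℕ) : ℝ) := Nat.cast_nonneg _
  refine Fin.addCases (fun j => ?_) (fun j => ?_) i
  · simp only [muStar, muGamma, eOne, eTwo, Pi.add_apply, Pi.sub_apply, Pi.neg_apply,
      Pi.smul_apply, smul_eq_mul, Fin.append_left]
    have := mul_le_mul_of_nonneg_left (hcσ j) hd
    linarith
  · simp only [muStar, muGamma, eOne, eTwo, Pi.add_apply, Pi.sub_apply, Pi.neg_apply,
      Pi.smul_apply, smul_eq_mul, Fin.append_right]
    have := mul_le_mul_of_nonneg_left (hcρ j.rev) hd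
    linarith
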